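/- The cohomology of the cochain complex of abelian groups Hom_{ℤ[D_{2p}]}(C(j)_*, ℤ) satisfies: H^n ≅ A_n ⊕ P′_n ⊕ Q′_n, where A_n = ℤ if n = 0 and 0 otherwise; P′_n = ℤ/p if 0 < n < 2m−1 and n ≡ 0 (mod 4), and 0 otherwise; and Q′_n = ℤ if n = 2m−1 and m is even, Q′_n = ℤ/2 if m+2 ≤ n ≤ 2m−1 and n ≡ m (mod 2), and Q′_n = 0 otherwise. (This is the value at the orbit D_{2p}/D_{2p} of the Bredon cohomology H^*_{D_{2p}}(S(mγ); constant ℤ) = ℤ ⊕ ⁰A^m ⊕ B^m[m−1].) -/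

import Mathlib

open DihedralGroup Finsupp

noncomputable section

namespace DihedralCell

variable (p : ℕ)

/-- ζ, the rotation of order `p`. -/
def zeta : DihedralGroup p := .r 1

/-- τ, the reflection. -/
def tau : DihedralGroup p := .sr 0

/-- The order-2 subgroup ⟨τ⟩. -/
def Htau : Subgroup (DihedralGroup p) := Subgroup.zpowers (tau p)

/-- Left cosets of ⟨τ⟩. -/
abbrev Cos := DihedralGroup p ⧸ Htau p

/-- Cell names of the dihedral cellular structure on `S(mγ_j)`: `a0 k q`/`b0 k q` are the
cells `q·a_{k,0}`, `q·b_{k,0}` (indexed by cosets of ⟨τ⟩); `a k l g`, `b k l g` (`1 ≤ l ≤ k-1`)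
are the free cells `g·a_{k,l}`, `g·b_{k,l}`; `c k g` is `g·c_k`. -/
inductive CIdx : Type
  | a0 (k : ℕ) (q : Cos p)
  | b0 (k : ℕ) (q : Cos p)
  | a (k l : ℕ) (g : DihedralGroup p)
  | b (k l : ℕ) (g : DihedralGroup p)
  | c (k : ℕ) (g : DihedralGroup p)

variable {p}

/-- The dimension of a cell. -/
def degC : CIdx p → ℕ
  | .a0 k _ => k - 1
  | .b0 k _ => k - 1
  | .a k l _ => k + l - 1
  | .b k l _ => k + l - 1
  | .c k _ => 2 * k - 1

/-- Validity of a cell index (the junk-free cells), for the sphere `S(mγ)`. -/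
def validC (m : ℕ) : CIdx p → Prop
  | .a0 k _ => 1 ≤ k ∧ k ≤ m
  | .b0 k _ => 1 ≤ k ∧ k ≤ m
  | .a k l _ => 1 ≤ l ∧ l ≤ k - 1 ∧ k ≤ m
  | .b k l _ => 1 ≤ l ∧ l ≤ k - 1 ∧ k ≤ m
  | .c k _ => 1 ≤ k ∧ k ≤ m

/-- The action of the dihedral group on cells. -/
def actC (g' : DihedralGroup p) : CIdx p → CIdx p
  | .a0 k q => .a0 k (g' • q)
  | .b0 k q => .b0 k (g' • q)
  | .a k l g => .a k l (g' * g)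
  | .b k l g => .b k l (g' * g)
  | .c k g => .c k (g' * g)

variable (p)

/-- The total module of cellular chains (all degrees together). -/
abbrev ChC := CIdx p →₀ ℤ

/-- The `ℤ`-linear action of `D_{2p}` on chains. -/
def rhoC (g : DihedralGroup p) : ChC p →ₗ[ℤ] ChC p :=
  Finsupp.lmapDomain ℤ ℤ (actC g)

/-- The submodule of chains of degree `n` (the degree-`n` term of the complex `C(j)`). -/
def Csub (m n : ℕ) : Submodule ℤ (ChC p) :=
  Finsupp.supported ℤ ℤ {i | validC m i ∧ degC i = n}

/-- The boundary of a single cell, following Lemma 2.2 of the paper (for the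
representation `γ_j`, i.e. with `ζ_i = ζ^j`). -/
def bndC (j : ℕ) : CIdx p → ChC p
  | .a0 k q => if k ≤ 1 then 0 else single (.a0 (k-1) q) 1 - single (.b0 (k-1) q) 1
  | .b0 k q => if k ≤ 1 then 0 else single (.a0 (k-1) q) 1 - single (.b0 (k-1) q) 1
  | .c k g =>
      if k ≤ 1 then
        (single (.b0 1 (↑(g * zeta p ^ (j * ((p+1)/2))))) 1 : ChC p) - single (.a0 1 ↑g) 1
      else
        single (.a k (k-1) g) (-1) + single (.a k (k-1) (g * tau p)) ((-1)^k)
        + single (.b k (k-1) (g * zeta p ^ (j * ((p+1)/2)))) 1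
        + single (.b k (k-1) (g * zeta p ^ (j * ((p+1)/2)) * tau p)) ((-1)^(k-1))
  | .a k l g =>
      if l = 0 then 0
      else if l = k - 1 then
        (if k = 2 then (single (.a0 k (↑g : Cos p)) (-1) : ChC p)
         else single (.a k (k-2) g) (-1) + single (.a k (k-2) (g * tau p)) ((-1)^(k-1)))
        + single (.c (k-1) g) (-1)
        - ∑ t ∈ Finset.range ((p-1)/2), single (.c (k-1) (g * zeta p ^ (j * (t+1)))) 1
        + ∑ t ∈ Finset.range ((p-1)/2),
            single (.c (k-1) (g * zeta p ^ (j * (t+1)) * tau p)) ((-1)^(k-2))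
      else if l = 1 then
        single (.a (k-1) 1 g) 1 - single (.b (k-1) 1 g) 1 + single (.a0 k (↑g : Cos p)) ((-1)^(k-1))
      else
        single (.a (k-1) l g) 1 - single (.b (k-1) l g) 1
        + single (.a k (l-1) g) ((-1)^(k-l)) + single (.a k (l-1) (g * tau p)) ((-1)^(k-1))
  | .b k l g =>
      if l = 0 then 0
      else if l = k - 1 then
        (if k = 2 then (single (.b0 k (↑g : Cos p)) (-1) : ChC p)
         else single (.b k (k-2) g) (-1) + single (.b k (k-2) (g * tau p)) ((-1)^(k-1)))
        + single (.c (k-1) g) (-1)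
        - ∑ t ∈ Finset.range ((p-1)/2), single (.c (k-1) (g * zeta p ^ (j * (t+1)))) 1
        + ∑ t ∈ Finset.range ((p-1)/2),
            single (.c (k-1) (g * zeta p ^ (j * (t+1)) * tau p)) ((-1)^(k-2))
      else if l = 1 then
        single (.a (k-1) 1 g) 1 - single (.b (k-1) 1 g) 1 + single (.b0 k (↑g : Cos p)) ((-1)^(k-1))
      else
        single (.a (k-1) l g) 1 - single (.b (k-1) l g) 1
        + single (.b k (l-1) g) ((-1)^(k-l)) + single (.b k (l-1) (g * tau p)) ((-1)^(k-1))

/-- The differential of the dihedral cellular complex `C(j)`. -/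
def DC (j : ℕ) : ChC p →ₗ[ℤ] ChC p :=
  Finsupp.lift (ChC p) ℤ (CIdx p) (bndC p j)

/-- The submodule of `D_{2p}`-invariant chains of degree `n`. -/
def InvC (m n : ℕ) : Submodule ℤ (ChC p) :=
  Csub p m n ⊓ (⨅ g : DihedralGroup p, LinearMap.ker (rhoC p g - LinearMap.id))

/-- Cycles of degree `n` of the underlying complex of abelian groups. -/
def ZcC (m j n : ℕ) : Submodule ℤ (ChC p) := Csub p m n ⊓ LinearMap.ker (DC p j)

/-- Degree-`n` homology of the underlying complex of abelian groups of `C(j)`. -/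
def HcC (m j n : ℕ) : Type :=
  ↥(ZcC p m j n) ⧸ Submodule.comap (ZcC p m j n).subtype
    (Submodule.map (DC p j) (Csub p m (n+1)))

instance (m j n : ℕ) : AddCommGroup (HcC p m j n) :=
  inferInstanceAs (AddCommGroup (↥(ZcC p m j n) ⧸ Submodule.comap (ZcC p m j n).subtype
    (Submodule.map (DC p j) (Csub p m (n+1)))))

instance (m j n : ℕ) : Module ℤ (HcC p m j n) :=
  inferInstanceAs (Module ℤ (↥(ZcC p m j n) ⧸ Submodule.comap (ZcC p m j n).subtype
    (Submodule.map (DC p j) (Csub p m (n+1)))))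

/-- Cycles of degree `n` of the complex of `D_{2p}`-invariants `(C(j))^{D_{2p}}`. -/
def ZinvC (m j n : ℕ) : Submodule ℤ (ChC p) := InvC p m n ⊓ LinearMap.ker (DC p j)

/-- Degree-`n` homology of the complex of `D_{2p}`-invariants of `C(j)`. -/
def HinvC (m j n : ℕ) : Type :=
  ↥(ZinvC p m j n) ⧸ Submodule.comap (ZinvC p m j n).subtype
    (Submodule.map (DC p j) (InvC p m (n+1)))

instance (m j n : ℕ) : AddCommGroup (HinvC p m j n) :=
  inferInstanceAs (AddCommGroup (↥(ZinvC p m j n) ⧸ Submodule.comap (ZinvC p m j n).subtype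
    (Submodule.map (DC p j) (InvC p m (n+1)))))

instance (m j n : ℕ) : Module ℤ (HinvC p m j n) :=
  inferInstanceAs (Module ℤ (↥(ZinvC p m j n) ⧸ Submodule.comap (ZinvC p m j n).subtype
    (Submodule.map (DC p j) (InvC p m (n+1)))))

/-- The dual module: `ℤ`-linear functionals on chains. -/
abbrev DualC := ChC p →ₗ[ℤ] ℤ

/-- Degree-`n` cochains of `Hom_{ℤ[D_{2p}]}(C(j), ℤ)`: `D_{2p}`-equivariant functionals
(`ℤ` with the trivial action) supported on the degree-`n` cells. -/
def KcoC (m n : ℕ) : Submodule ℤ (DualC p) :=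
  (⨅ i : {i : CIdx p // ¬(validC m i ∧ degC i = n)},
      LinearMap.ker (LinearMap.applyₗ (single i.1 1)))
  ⊓ (⨅ g : DihedralGroup p, LinearMap.ker (LinearMap.lcomp ℤ ℤ (rhoC p g) - LinearMap.id))

open Classical in
/-- Projection of the total chain module onto its degree-`n` summand. -/
def projC (m n : ℕ) : ChC p →ₗ[ℤ] ChC p :=
  Finsupp.lift (ChC p) ℤ (CIdx p)
    (fun i => if validC m i ∧ degC i = n then single i 1 else 0)

/-- The coboundary taking a degree-`n` cochain `f` to the degree-`(n+1)` cochain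
`f ∘ d` (precomposition with the differential out of degree `n+1`). -/
def cobdC (m j n : ℕ) : DualC p →ₗ[ℤ] DualC p :=
  LinearMap.lcomp ℤ ℤ ((DC p j).comp (projC p m (n+1)))

/-- Degree-`n` cocycles of `Hom_{ℤ[D_{2p}]}(C(j), ℤ)`. -/
def ZcoC (m j n : ℕ) : Submodule ℤ (DualC p) := KcoC p m n ⊓ LinearMap.ker (cobdC p m j n)

/-- Degree-`n` cohomology of the cochain complex `Hom_{ℤ[D_{2p}]}(C(j), ℤ)`. -/
def HcoC (m j n : ℕ) : Type :=
  ↥(ZcoC p m j n) ⧸ Submodule.comap (ZcoC p m j n).subtype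
    (Submodule.map (cobdC p m j (n-1)) (KcoC p m (n-1)))

instance (m j n : ℕ) : AddCommGroup (HcoC p m j n) :=
  inferInstanceAs (AddCommGroup (↥(ZcoC p m j n) ⧸ Submodule.comap (ZcoC p m j n).subtype
    (Submodule.map (cobdC p m j (n-1)) (KcoC p m (n-1)))))

instance (m j n : ℕ) : Module ℤ (HcoC p m j n) :=
  inferInstanceAs (Module ℤ (↥(ZcoC p m j n) ⧸ Submodule.comap (ZcoC p m j n).subtype
    (Submodule.map (cobdC p m j (n-1)) (KcoC p m (n-1)))))


end DihedralCell

end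

noncomputable section

namespace DihedralCell

variable {p : ℕ}

/-- Generator `a_{k,l}`. -/
def chA (p k l : ℕ) : ChC p :=
  if l = 0 then single (.a0 k ((1 : DihedralGroup p) : Cos p)) 1 else single (.a k l 1) 1

/-- Generator `b_{k,l}`. -/
def chB (p k l : ℕ) : ChC p :=
  if l = 0 then single (.b0 k ((1 : DihedralGroup p) : Cos p)) 1 else single (.b k l 1) 1

/-- The chain `a_{k,l} - b_{k,l}` (or `-c_k` if `l = k`). -/
def chD (p k l : ℕ) : ChC p :=
  if l = k then - single (.c k 1) 1 else chA p k l - chB p k l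

/-- vertical coefficient -/
def ee (k l : ℕ) : ℤ :=
  if l = 0 then 0 else if l = 1 then (-1)^(k+1) else (-1)^(k+1) + (-1)^(k+l)

/-- horizontal coefficient -/
def ww (p k l : ℕ) : ℤ := if l + 1 = k ∧ Odd k then p else 1

lemma mem_Kco {m n : ℕ} {f : DualC p} : f ∈ KcoC p m n ↔
    (∀ i, ¬ (validC m i ∧ degC i = n) → f (single i 1) = 0) ∧
    (∀ g i, f (single (actC g i) 1) = f (single i 1)) := by
  simp only [KcoC, Submodule.mem_inf, Submodule.mem_iInf, LinearMap.mem_ker, Subtype.forall]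
  refine and_congr Iff.rfl (forall_congr' fun g => ?_)
  rw [LinearMap.sub_apply, sub_eq_zero]
  constructor
  · intro h i
    have := LinearMap.congr_fun h (single i 1)
    simpa [rhoC] using this
  · intro h
    ext i
    simpa [rhoC] using h i

lemma single_smul (f : DualC p) (i : CIdx p) (z : ℤ) : f (single i z) = z * f (single i 1) := by
  rw [← smul_eq_mul, ← map_smul]; simp

section inv
variable {m n : ℕ} {f : DualC p} (hf : f ∈ KcoC p m n)
include hf

lemma inv_a0 (k : ℕ) (x : DihedralGroup p) (z : ℤ) :
    f (single (.a0 k (x : Cos p)) z) = z * f (chA p k 0) := by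
  rw [single_smul, ← (mem_Kco.1 hf).2 x⁻¹]; simp [actC, chA, MulAction.Quotient.smul_coe]

lemma inv_b0 (k : ℕ) (x : DihedralGroup p) (z : ℤ) :
    f (single (.b0 k (x : Cos p)) z) = z * f (chB p k 0) := by
  rw [single_smul, ← (mem_Kco.1 hf).2 x⁻¹]; simp [actC, chB, MulAction.Quotient.smul_coe]

lemma inv_a (k l : ℕ) (hl : l ≠ 0) (x : DihedralGroup p) (z : ℤ) :
    f (single (.a k l x) z) = z * f (chA p k l) := by
  rw [single_smul, ← (mem_Kco.1 hf).2 x⁻¹]; simp [actC, chA, hl]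

lemma inv_b (k l : ℕ) (hl : l ≠ 0) (x : DihedralGroup p) (z : ℤ) :
    f (single (.b k l x) z) = z * f (chB p k l) := by
  rw [single_smul, ← (mem_Kco.1 hf).2 x⁻¹]; simp [actC, chB, hl]

lemma inv_c (k : ℕ) (x : DihedralGroup p) (z : ℤ) :
    f (single (.c k x) z) = - z * f (chD p k k) := by
  rw [single_smul, ← (mem_Kco.1 hf).2 x⁻¹]; simp [actC, chD]

end inv

lemma zero_of_coords {m n : ℕ} {f : DualC p} (hf : f ∈ KcoC p m n)
    (hA : ∀ k l, l < k → k ≤ m → k + l = n + 1 → f (chA p k l) = 0)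
    (hD : ∀ k l, 1 ≤ k → l ≤ k → k ≤ m → k + l = n + 1 → f (chD p k l) = 0) : f = 0 := by
  have hB : ∀ k l, l < k → k ≤ m → k + l = n + 1 → f (chB p k l) = 0 := by
    intro k l h1 h2 h3
    have := hD k l (by omega) (by omega) h2 h3
    rw [chD, if_neg (by omega), map_sub, hA k l h1 h2 h3] at this
    omega
  ext i
  simp only [LinearMap.coe_comp, Function.comp_apply, lsingle_apply, LinearMap.zero_apply]
  by_cases hi : validC m i ∧ degC i = n
  · rcases i with ⟨k, q⟩ | ⟨k, q⟩ | ⟨k, l, g⟩ | ⟨k, l, g⟩ | ⟨k, g⟩ <;>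
      simp only [validC, degC] at hi
    · induction q using QuotientGroup.induction_on with | _ x => ?_
      rw [inv_a0 hf, hA k 0 (by omega) (by omega) (by omega), mul_zero]
    · induction q using QuotientGroup.induction_on with | _ x => ?_
      rw [inv_b0 hf, hB k 0 (by omega) (by omega) (by omega), mul_zero]
    · rw [inv_a hf _ _ (by omega), hA k l (by omega) (by omega) (by omega), mul_zero]
    · rw [inv_b hf _ _ (by omega), hB k l (by omega) (by omega) (by omega), mul_zero]
    · rw [inv_c hf, hD k k (by omega) (by omega) (by omega) (by omega), mul_zero]
  · exact (mem_Kco.1 hf).1 i hi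

/-- values of the cochain with given coordinates -/
def mkVal (A D : ℕ → ℕ → ℤ) : CIdx p → ℤ
  | .a0 k _ => A k 0
  | .b0 k _ => A k 0 - D k 0
  | .a k l _ => A k l
  | .b k l _ => A k l - D k l
  | .c k _ => - D k k

open Classical in
/-- the cochain with given coordinates -/
def mkCo (p m n : ℕ) (A D : ℕ → ℕ → ℤ) : DualC p :=
  Finsupp.lift ℤ ℤ (CIdx p) (fun i => if validC m i ∧ degC i = n then mkVal A D i else 0)

open Classical in
lemma mkCo_single (m n : ℕ) (A D : ℕ → ℕ → ℤ) (i : CIdx p) : mkCo p m n A D (single i 1) =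
    if validC m i ∧ degC i = n then mkVal A D i else 0 := by
  simp [mkCo]

lemma mkCo_mem (m n : ℕ) (A D : ℕ → ℕ → ℤ) : mkCo p m n A D ∈ KcoC p m n := by
  classical
  rw [mem_Kco]
  refine ⟨fun i hi => by rw [mkCo_single, if_neg hi], fun g i => ?_⟩
  rw [mkCo_single, mkCo_single]
  cases i <;> rfl

lemma mkCo_A (m n : ℕ) (A D : ℕ → ℕ → ℤ) (k l : ℕ) (h1 : l < k) (h2 : k ≤ m)
    (h3 : k + l = n + 1) : mkCo p m n A D (chA p k l) = A k l := by
  rw [chA]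
  split_ifs with h
  · subst h
    rw [mkCo_single, if_pos (by simp only [validC, degC]; omega)]; rfl
  · rw [mkCo_single, if_pos (by simp only [validC, degC]; omega)]; rfl

lemma mkCo_B (m n : ℕ) (A D : ℕ → ℕ → ℤ) (k l : ℕ) (h1 : l < k) (h2 : k ≤ m)
    (h3 : k + l = n + 1) : mkCo p m n A D (chB p k l) = A k l - D k l := by
  rw [chB]
  split_ifs with h
  · subst h
    rw [mkCo_single, if_pos (by simp only [validC, degC]; omega)]; rfl
  · rw [mkCo_single, if_pos (by simp only [validC, degC]; omega)]; rfl

lemma mkCo_D (m n : ℕ) (A D : ℕ → ℕ → ℤ) (k l : ℕ) (h0 : 1 ≤ k) (h1 : l ≤ k) (h2 : k ≤ m)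
    (h3 : k + l = n + 1) : mkCo p m n A D (chD p k l) = D k l := by
  rw [chD]
  split_ifs with h
  · subst h
    rw [map_neg, mkCo_single, if_pos (by simp only [validC, degC]; omega)]; simp [mkVal]
  · rw [map_sub, mkCo_A _ _ _ _ _ _ (by omega) h2 h3, mkCo_B _ _ _ _ _ _ (by omega) h2 h3]; ring

open Classical in
lemma cobd_single (m j n : ℕ) (f : DualC p) (i : CIdx p) : cobdC p m j n f (single i 1) =
    if validC m i ∧ degC i = n + 1 then f (bndC p j i) else 0 := by
  simp only [cobdC, LinearMap.lcomp_apply, LinearMap.comp_apply, projC]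
  simp only [Finsupp.lift_apply, Finsupp.sum_single_index, zero_smul, one_smul]
  split_ifs <;> simp [DC]

lemma cobd_mem {m j n : ℕ} {f : DualC p} (hf : f ∈ KcoC p m n) :
    cobdC p m j n f ∈ KcoC p m (n+1) := by
  classical
  rw [mem_Kco]
  refine ⟨fun i hi => by rw [cobd_single, if_neg hi], fun g i => ?_⟩
  rw [cobd_single, cobd_single]
  have e1 : (validC m (actC g i) ∧ degC (actC g i) = n + 1) ↔ (validC m i ∧ degC i = n + 1) := by
    cases i <;> rfl
  simp only [e1]
  split_ifs with h
  · rcases i with ⟨k, q⟩ | ⟨k, q⟩ | ⟨k, l, x⟩ | ⟨k, l, x⟩ | ⟨k, x⟩ <;>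
      simp only [validC, degC] at h
    · induction q using QuotientGroup.induction_on with | _ x => ?_
      have : g • (x : Cos p) = ((g * x : DihedralGroup p) : Cos p) := rfl
      simp only [actC, bndC, this]
      split_ifs <;> simp only [map_sub, map_zero, inv_a0 hf, inv_b0 hf]
    · induction q using QuotientGroup.induction_on with | _ x => ?_
      have : g • (x : Cos p) = ((g * x : DihedralGroup p) : Cos p) := rfl
      simp only [actC, bndC, this]
      split_ifs <;> simp only [map_sub, map_zero, inv_a0 hf, inv_b0 hf]
    · have h1 : l - 1 = 0 → l = 1 := by omega
      simp only [actC, bndC]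
      split_ifs <;> simp only [map_sub, map_add, map_zero, map_sum, inv_a0 hf, inv_b0 hf, inv_c hf] <;>
      (repeat rw [inv_a hf _ _ (by omega)]) <;> (repeat rw [inv_b hf _ _ (by omega)])
    · have h1 : l - 1 = 0 → l = 1 := by omega
      simp only [actC, bndC]
      split_ifs <;> simp only [map_sub, map_add, map_zero, map_sum, inv_a0 hf, inv_b0 hf, inv_c hf] <;>
      (repeat rw [inv_a hf _ _ (by omega)]) <;> (repeat rw [inv_b hf _ _ (by omega)])
    · simp only [actC, bndC]
      split_ifs <;> simp only [map_sub, map_add, map_zero, map_sum, inv_a0 hf, inv_b0 hf, inv_c hf] <;>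
      (repeat rw [inv_a hf _ _ (by omega)]) <;> (repeat rw [inv_b hf _ _ (by omega)])
  · rfl

lemma ee_zero (k : ℕ) : ee k 0 = 0 := by simp [ee]

lemma ee_even (k l : ℕ) (hl : Even l) : ee k l = 0 := by
  rcases hl with ⟨t, rfl⟩
  rw [ee]
  split_ifs
  · rfl
  · omega
  · rw [pow_add, pow_add (-1 : ℤ) k (t+t), Even.neg_one_pow ⟨t, rfl⟩]; ring

lemma ee_odd (k l : ℕ) (hl : Odd l) (h1 : l ≠ 1) : ee k l = 2 * (-1)^(k+1) := by
  have h0 : l ≠ 0 := by rintro rfl; simp at hl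
  rw [ee, if_neg h0, if_neg h1, pow_add (-1 : ℤ) k l, hl.neg_one_pow]; ring

lemma ee_succ (k l : ℕ) : ee (k+1) l = - ee k l := by
  simp only [ee]; split_ifs <;> ring

lemma ww_one {k l : ℕ} (h : l + 1 < k) : ww p k l = 1 := by
  rw [ww, if_neg (by omega)]

section cob
variable {m j n : ℕ} {f : DualC p} (hf : f ∈ KcoC p m n) (hodd : Odd p)
include hf hodd

lemma top_coef (k : ℕ) (hk : 2 ≤ k) (v : ℤ) :
   v - ∑ t ∈ Finset.range ((p-1)/2), -1 * v + ∑ t ∈ Finset.range ((p-1)/2), -((-1)^(k-2)) * v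
     = ww p k (k-1) * v := by
  obtain ⟨s, rfl⟩ := hodd
  obtain ⟨k, rfl⟩ := Nat.exists_eq_add_of_le' hk
  have : (2 * s + 1 - 1) / 2 = s := by omega
  simp only [this, Finset.sum_const, Finset.card_range, ww]
  rcases Nat.even_or_odd k with h | h
  · rw [if_neg (by rintro ⟨-, h'⟩; rw [Nat.odd_iff] at h'; rw [Nat.even_iff] at h; omega)]
    simp [h.neg_one_pow]
  · rw [if_pos ⟨by omega, by rw [Nat.odd_iff] at *; omega⟩]
    simp [h.neg_one_pow]; ring

lemma cobd_A {k l : ℕ} (h1 : l < k) (h2 : k ≤ m) (h3 : k + l = n + 2) :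
    cobdC p m j n f (chA p k l) =
      ww p k l * f (chD p (k-1) l) + ee k l * f (chA p k (l-1)) := by
  rw [chA]
  rcases Nat.eq_zero_or_pos l with rfl | hl
  · rw [if_pos rfl, cobd_single, if_pos (by simp only [validC, degC]; omega), bndC,
      if_neg (by omega), map_sub, inv_a0 hf, inv_b0 hf, ee_zero, chD, if_neg (by omega)]
    rw [map_sub, ww, if_neg]
    · ring
    · rintro ⟨h, h'⟩
      omega
  · rw [if_neg (by omega), cobd_single, if_pos (by simp only [validC, degC]; omega), bndC,
      if_neg (by omega)]
    split_ifs with h4 h5 h6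
    · subst h4 h5
      simp only [map_add, map_sub, map_sum, inv_a0 hf, inv_c hf]
      have := top_coef hf hodd 2 (by omega) (f (chD p 1 1))
      simp [ee] at this ⊢
      linarith
    · subst h4
      simp only [map_add, map_sub, map_sum, inv_c hf]
      rw [inv_a hf _ _ (by omega), inv_a hf _ _ (by omega)]
      have := top_coef hf hodd k (by omega) (f (chD p (k-1) (k-1)))
      obtain ⟨k, rfl⟩ := Nat.exists_eq_add_of_le' (show 3 ≤ k by omega)
      rw [← this, ee, if_neg (by omega), if_neg (by omega)]
      have e1 : (-1 : ℤ)^(k+3+(k+3-1)) = -1 := Odd.neg_one_pow ⟨k+2, by omega⟩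
      have e2 : (-1 : ℤ)^(k+3-1) = (-1)^k := by
        rw [show k + 3 - 1 = k + 2 by omega, pow_add]; norm_num
      rw [e1, e2]
      simp only [show k + 3 - 1 - 1 = k + 3 - 2 by omega]
      ring
    · subst h6
      simp only [map_add, map_sub, inv_a0 hf]
      rw [inv_a hf _ _ (by omega), inv_b hf _ _ (by omega), ww_one (by omega), chD,
        if_neg (by omega), map_sub]
      obtain ⟨k, rfl⟩ := Nat.exists_eq_add_of_le' (show 1 ≤ k by omega)
      simp [ee, pow_add]
    · simp only [map_add, map_sub]
      rw [inv_a hf _ _ (by omega), inv_b hf _ _ (by omega), inv_a hf _ _ (by omega),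
        inv_a hf _ _ (by omega), ww_one (by omega), chD, if_neg (by omega), map_sub,
        ee, if_neg (by omega), if_neg (by omega)]
      obtain ⟨d, rfl⟩ := Nat.exists_eq_add_of_lt h1
      have e1 : (-1 : ℤ)^(l+d+1+l) = (-1)^(l+d+1-l) := by
        rw [show l+d+1+l = (l + l) + (d+1) by ring, pow_add, Even.neg_one_pow ⟨l, rfl⟩,
          show l + d + 1 - l = d+1 by omega, one_mul]
      have e2 : (-1 : ℤ)^(l+d+1-1) = (-1)^(l+d+1+1) := by
        rw [show l + d + 1 - 1 = l+d by omega, pow_add _ (l+d+1), pow_add _ (l+d)]; ring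
      rw [e1, e2]; ring

lemma cobd_B {k l : ℕ} (h1 : l < k) (h2 : k ≤ m) (h3 : k + l = n + 2) :
    cobdC p m j n f (chB p k l) =
      ww p k l * f (chD p (k-1) l) + ee k l * f (chB p k (l-1)) := by
  rw [chB]
  rcases Nat.eq_zero_or_pos l with rfl | hl
  · rw [if_pos rfl, cobd_single, if_pos (by simp only [validC, degC]; omega), bndC,
      if_neg (by omega), map_sub, inv_a0 hf, inv_b0 hf, ee_zero, chD, if_neg (by omega)]
    rw [map_sub, ww, if_neg]
    · ring
    · rintro ⟨h, h'⟩
      omega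
  · rw [if_neg (by omega), cobd_single, if_pos (by simp only [validC, degC]; omega), bndC,
      if_neg (by omega)]
    split_ifs with h4 h5 h6
    · subst h4 h5
      simp only [map_add, map_sub, map_sum, inv_b0 hf, inv_c hf]
      have := top_coef hf hodd 2 (by omega) (f (chD p 1 1))
      simp [ee] at this ⊢
      linarith
    · subst h4
      simp only [map_add, map_sub, map_sum, inv_c hf]
      rw [inv_b hf _ _ (by omega), inv_b hf _ _ (by omega)]
      have := top_coef hf hodd k (by omega) (f (chD p (k-1) (k-1)))
      obtain ⟨k, rfl⟩ := Nat.exists_eq_add_of_le' (show 3 ≤ k by omega)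
      rw [← this, ee, if_neg (by omega), if_neg (by omega)]
      have e1 : (-1 : ℤ)^(k+3+(k+3-1)) = -1 := Odd.neg_one_pow ⟨k+2, by omega⟩
      have e2 : (-1 : ℤ)^(k+3-1) = (-1)^k := by
        rw [show k + 3 - 1 = k + 2 by omega, pow_add]; norm_num
      rw [e1, e2]
      simp only [show k + 3 - 1 - 1 = k + 3 - 2 by omega]
      ring
    · subst h6
      simp only [map_add, map_sub, inv_b0 hf]
      rw [inv_a hf _ _ (by omega), inv_b hf _ _ (by omega), ww_one (by omega), chD,
        if_neg (by omega), map_sub]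
      obtain ⟨k, rfl⟩ := Nat.exists_eq_add_of_le' (show 1 ≤ k by omega)
      simp [ee, pow_add]
    · simp only [map_add, map_sub]
      rw [inv_a hf _ _ (by omega), inv_b hf _ _ (by omega), inv_b hf _ _ (by omega),
        inv_b hf _ _ (by omega), ww_one (by omega), chD, if_neg (by omega), map_sub,
        ee, if_neg (by omega), if_neg (by omega)]
      obtain ⟨d, rfl⟩ := Nat.exists_eq_add_of_lt h1
      have e1 : (-1 : ℤ)^(l+d+1+l) = (-1)^(l+d+1-l) := by
        rw [show l+d+1+l = (l + l) + (d+1) by ring, pow_add, Even.neg_one_pow ⟨l, rfl⟩,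
          show l + d + 1 - l = d+1 by omega, one_mul]
      have e2 : (-1 : ℤ)^(l+d+1-1) = (-1)^(l+d+1+1) := by
        rw [show l + d + 1 - 1 = l+d by omega, pow_add _ (l+d+1), pow_add _ (l+d)]; ring
      rw [e1, e2]; ring

omit hf hodd in
lemma f_chD {k l : ℕ} (h : l ≠ k) : f (chD p k l) = f (chA p k l) - f (chB p k l) := by
  rw [chD, if_neg h, map_sub]

lemma cobd_D {k l : ℕ} (h0 : 1 ≤ k) (h1 : l ≤ k) (h2 : k ≤ m) (h3 : k + l = n + 2) :
    cobdC p m j n f (chD p k l) = ee k l * f (chD p k (l-1)) := by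
  rw [f_chD (f := f) (k := k) (l := l-1) (by omega)]
  by_cases h : l = k
  · subst h
    rw [chD, if_pos rfl, map_neg, cobd_single, if_pos (by simp only [validC, degC]; omega), bndC]
    split_ifs with h4
    · obtain rfl : l = 1 := by omega
      simp only [map_sub, inv_a0 hf, inv_b0 hf]
      simp [ee]
    · simp only [map_add]
      rw [inv_a hf _ _ (by omega), inv_b hf _ _ (by omega), inv_a hf _ _ (by omega),
        inv_b hf _ _ (by omega), ee, if_neg (by omega), if_neg (by omega)]
      obtain ⟨l, rfl⟩ := Nat.exists_eq_add_of_le' h0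
      rw [Even.neg_one_pow ⟨l+1, rfl⟩]
      simp only [Nat.add_sub_cancel]
      ring
  · rw [f_chD h, cobd_A hf hodd (by omega) h2 h3, cobd_B hf hodd (by omega) h2 h3]
    ring

end cob

/-- order of the `P'` summand -/
def NP (p m n : ℕ) : ℕ := if 0 < n ∧ n < 2 * m - 1 ∧ n % 4 = 0 then p else 1

/-- order of the `Q'` summand -/
def NQ (m n : ℕ) : ℕ := if n = 2 * m - 1 ∧ Even m then 0
  else if m + 2 ≤ n ∧ n ≤ 2 * m - 1 ∧ n % 2 = m % 2 then 2 else 1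

/-- order of the `A` summand -/
def NA (n : ℕ) : ℕ := if n = 0 then 0 else 1

/-- reduction of an evaluation -/
def redEv (p N : ℕ) (x : ChC p) : DualC p →ₗ[ℤ] ZMod N :=
  (Int.castAddHom (ZMod N)).toIntLinearMap ∘ₗ LinearMap.applyₗ x

lemma redEv_apply (N : ℕ) (x : ChC p) (f : DualC p) : redEv p N x f = ((f x : ℤ) : ZMod N) := rfl

/-- the comparison map -/
def Phi (p m j n : ℕ) : ZcoC p m j n →ₗ[ℤ] (ZMod (NA n) × ZMod (NP p m n) × ZMod (NQ m n)) :=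
  ((redEv p (NA n) (chA p 1 0)).prod ((redEv p (NP p m n) (chA p (n/2+1) (n/2))).prod
    (redEv p (NQ m n) (chD p m (n+1-m))))).comp (ZcoC p m j n).subtype

lemma Phi_eq_zero {m j n : ℕ} (f : ZcoC p m j n) : Phi p m j n f = 0 ↔
    ((NA n : ℤ) ∣ f.1 (chA p 1 0)) ∧ ((NP p m n : ℤ) ∣ f.1 (chA p (n/2+1) (n/2))) ∧
    ((NQ m n : ℤ) ∣ f.1 (chD p m (n+1-m))) := by
  rw [← CharP.intCast_eq_zero_iff (ZMod (NA n)), ← CharP.intCast_eq_zero_iff (ZMod (NP p m n)),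
    ← CharP.intCast_eq_zero_iff (ZMod (NQ m n))]
  simp only [Prod.ext_iff]
  rfl

lemma cocycle_A {m j n : ℕ} {f : DualC p} (hodd : Odd p) (hf : f ∈ ZcoC p m j n) {k l : ℕ}
    (h1 : l < k) (h2 : k ≤ m) (h3 : k + l = n + 2) :
    ww p k l * f (chD p (k-1) l) + ee k l * f (chA p k (l-1)) = 0 := by
  have h := cobd_A (j := j) hf.1 hodd h1 h2 h3
  rw [LinearMap.mem_ker.1 hf.2] at h
  exact h.symm

lemma cocycle_D {m j n : ℕ} {f : DualC p} (hodd : Odd p) (hf : f ∈ ZcoC p m j n) {k l : ℕ}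
    (h0 : 1 ≤ k) (h1 : l ≤ k) (h2 : k ≤ m) (h3 : k + l = n + 2) :
    ee k l * f (chD p k (l-1)) = 0 := by
  have h := cobd_D (j := j) hf.1 hodd h0 h1 h2 h3
  rw [LinearMap.mem_ker.1 hf.2] at h
  exact h.symm

lemma mkCo_cocycle {m j n : ℕ} (hodd : Odd p) (A D : ℕ → ℕ → ℤ)
    (hA : ∀ k l, l < k → k ≤ m → k + l = n + 2 → 
      ww p k l * D (k-1) l + (if l = 0 then 0 else ee k l * A k (l-1)) = 0)
    (hD : ∀ k l, 1 ≤ k → l ≤ k → k ≤ m → k + l = n + 2 → l ≠ 0 → ee k l * D k (l-1) = 0) :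
    mkCo p m n A D ∈ ZcoC p m j n := by
  refine ⟨mkCo_mem _ _ _ _, LinearMap.mem_ker.2 (zero_of_coords (cobd_mem (mkCo_mem _ _ _ _)) ?_ ?_)⟩
  · intro k l h1 h2 h3
    rw [cobd_A (mkCo_mem _ _ _ _) hodd h1 h2 h3, ← hA k l h1 h2 h3,
      mkCo_D _ _ _ _ _ _ (by omega) (by omega) (by omega) (by omega)]
    split_ifs with h
    · subst h; simp [ee_zero]
    · rw [mkCo_A _ _ _ _ _ _ (by omega) (by omega) (by omega)]
  · intro k l h0 h1 h2 h3
    rw [cobd_D (mkCo_mem _ _ _ _) hodd h0 h1 h2 h3]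
    by_cases h : l = 0
    · subst h; simp [ee_zero]
    · rw [mkCo_D _ _ _ _ _ _ (by omega) (by omega) (by omega) (by omega), hD k l h0 h1 h2 h3 h]

lemma zmod_NA {n : ℕ} (x : ℤ) (h : n ≠ 0) (y : ZMod (NA n)) : (x : ZMod (NA n)) = y := by
  have : NA n = 1 := by simp [NA, h]
  revert y; rw [this]; intro y; exact Subsingleton.elim _ _

lemma zmod_one {N : ℕ} (h : N = 1) (x y : ZMod N) : x = y := by
  subst h; exact Subsingleton.elim _ _

lemma Phi_surj (m j n : ℕ) (hodd : Odd p) (hm : 1 ≤ m) :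
    Function.Surjective (Phi p m j n) := by
  classical
  rintro ⟨x, y, z⟩
  obtain ⟨x, rfl⟩ := ZMod.intCast_surjective x
  obtain ⟨y, rfl⟩ := ZMod.intCast_surjective y
  obtain ⟨z, rfl⟩ := ZMod.intCast_surjective z
  let A : ℕ → ℕ → ℤ := fun k l => if n = 0 then x else
    if k = l + 1 ∧ n % 4 = 0 then y else 0
  let D : ℕ → ℕ → ℤ := fun k l => if k = m ∧ NQ m n ≠ 1 then z else 0
  have hmem : mkCo p m n A D ∈ ZcoC p m j n := by
    apply mkCo_cocycle hodd
    · intro k l h1 h2 h3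
      have : D (k-1) l = 0 := if_neg (by omega)
      rw [this, mul_zero, zero_add]
      split_ifs with h
      · rfl
      · have : A k (l-1) = 0 := by
          simp only [A]
          rw [if_neg (by omega), if_neg (by omega)]
        rw [this, mul_zero]
    · intro k l h0 h1 h2 h3 h
      by_cases hD : k = m ∧ NQ m n ≠ 1
      · rw [ee_even, zero_mul]
        obtain ⟨rfl, hD⟩ := hD
        simp only [NQ] at hD
        split_ifs at hD with h4 h5
        · omega
        · rw [Nat.even_iff]; omega
        · simp at hD
      · have : D k (l-1) = 0 := if_neg hD
        rw [this, mul_zero]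
  refine ⟨⟨_, hmem⟩, ?_⟩
  refine Prod.ext ?_ (Prod.ext ?_ ?_)
  · change ((mkCo p m n A D (chA p 1 0) : ℤ) : ZMod (NA n)) = (x : ZMod (NA n))
    by_cases h : n = 0
    · rw [mkCo_A _ _ _ _ _ _ (by omega) (by omega) (by omega)]
      simp [A, h]
    · exact zmod_one (by simp [NA, h]) _ _
  · change ((mkCo p m n A D (chA p (n/2+1) (n/2)) : ℤ) : ZMod (NP p m n)) = (y : ZMod (NP p m n))
    by_cases h : 0 < n ∧ n < 2 * m - 1 ∧ n % 4 = 0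
    · rw [mkCo_A _ _ _ _ _ _ (by omega) (by omega) (by omega)]
      simp only [A]
      rw [if_neg (by omega), if_pos ⟨trivial, h.2.2⟩]
    · exact zmod_one (by simp only [NP]; rw [if_neg h]) _ _
  · change ((mkCo p m n A D (chD p m (n+1-m)) : ℤ) : ZMod (NQ m n)) = (z : ZMod (NQ m n))
    by_cases h : NQ m n = 1
    · exact zmod_one h _ _
    · have : m ≤ n + 1 ∧ n ≤ 2 * m - 1 := by
        simp only [NQ] at h
        split_ifs at h
        · omega
        · omega
        · simp at h
      rw [mkCo_D _ _ _ _ _ _ (by omega) (by omega) (by omega) (by omega)]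
      simp [D, h]

lemma Phi_ker (m j n : ℕ) (hp : p.Prime) (hodd : Odd p) (hm : 1 ≤ m) :
    LinearMap.ker (Phi p m j n) = Submodule.comap (ZcoC p m j n).subtype
      (Submodule.map (cobdC p m j (n-1)) (KcoC p m (n-1))) := by
  have hp0 : (p : ℤ) ≠ 0 := by exact_mod_cast hp.ne_zero
  have hww0 : ∀ k l, ww p k l ≠ 0 := by
    intro k l; rw [ww]; split_ifs
    · exact hp0
    · exact one_ne_zero
  have hee1 : ∀ k, ee k 1 * ee k 1 = 1 := by
    intro k; simp [ee, ← mul_pow]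
  ext ⟨f, hf⟩
  rw [LinearMap.mem_ker, Phi_eq_zero, Submodule.mem_comap, Submodule.subtype_apply,
    Submodule.mem_map]
  simp only
  constructor
  · rintro ⟨dA, dP, dQ⟩
    -- divisibility facts
    have hwA : ∀ k l, l < k → k ≤ m → k + l = n + 1 → 2 ≤ k → ww p k l ∣ f (chA p k l) := by
      intro k l h1 h2 h3 h4
      rw [ww]
      split_ifs with h
      · obtain ⟨rfl, t, ht⟩ := h
        have e1 : n / 2 = l := by omega
        rw [e1, NP, if_pos (by omega)] at dP
        exact dP
      · exact one_dvd _
    have hQ : ∀ l, l ≤ m → m + l = n + 1 → l ≠ 0 → ee m l ∣ f (chD p m l) := by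
      intro l h1 h2 h3
      have e1 : n + 1 - m = l := by omega
      rw [e1] at dQ
      by_cases hl1 : l = 1
      · subst hl1
        exact (Dvd.intro _ (hee1 m)).trans (one_dvd _)
      rcases Nat.even_or_odd l with he | ho
      · have : f (chD p m l) = 0 := by
          by_cases hlm : l = m
          · subst hlm
            rw [NQ, if_pos ⟨by omega, he⟩] at dQ
            simpa using dQ
          · have := cocycle_D hodd hf (k := m) (l := l+1) hm (by omega) le_rfl (by omega)
            rw [ee_odd _ _ he.add_one (by omega)] at this
            simpa using this
        rw [this]; exact dvd_zero _
      · have ho' := ho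
        rw [Nat.odd_iff] at ho'
        rw [NQ, if_neg, if_pos (by omega)] at dQ
        · rw [ee_odd _ _ ho hl1]
          rcases neg_one_pow_eq_or ℤ (m+1) with h | h <;> rw [h]
          · simpa using dQ
          · simpa using dQ
        · rintro ⟨h, h'⟩
          rw [Nat.even_iff] at h'
          omega
    have hD0 : ∀ k, 1 ≤ k → k ≤ m → k = n + 1 → f (chD p k 0) = 0 := by
      intro k h1 h2 h3
      have := cocycle_D hodd hf (k := k) (l := 1) h1 h1 h2 (by omega)
      have h5 := congrArg (fun t => ee k 1 * t) this
      simp only [← mul_assoc, hee1] at h5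
      simpa using h5
    rcases Nat.eq_zero_or_pos n with rfl | hn
    · refine ⟨0, zero_mem _, ?_⟩
      rw [map_zero, eq_comm]
      refine zero_of_coords hf.1 ?_ ?_
      · intro k l h1 h2 h3
        obtain ⟨rfl, rfl⟩ : k = 1 ∧ l = 0 := by omega
        simpa [NA] using dA
      · intro k l h0 h1 h2 h3
        obtain ⟨rfl, rfl⟩ : k = 1 ∧ l = 0 := by omega
        exact hD0 1 le_rfl h2 rfl
    · obtain ⟨n, rfl⟩ := Nat.exists_eq_add_of_le' hn
      simp only [Nat.add_sub_cancel]
      let D : ℕ → ℕ → ℤ := fun k l => if k = m then f (chD p k (l+1)) / ee k (l+1)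
        else f (chA p (k+1) l) / ww p (k+1) l
      have hg := mkCo_mem (p := p) m n 0 D
      refine ⟨mkCo p m n 0 D, hg, ?_⟩
      rw [← sub_eq_zero]
      refine zero_of_coords (sub_mem (cobd_mem hg) hf.1) ?_ ?_
      · intro k l h1 h2 h3
        rw [LinearMap.sub_apply, cobd_A hg hodd h1 h2 (by omega),
          mkCo_D _ _ _ _ _ _ (by omega) (by omega) (by omega) (by omega)]
        have e1 : ee k l * mkCo p m n 0 D (chA p k (l-1)) = 0 := by
          rcases Nat.eq_zero_or_pos l with rfl | hl
          · rw [ee_zero, zero_mul]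
          · rw [mkCo_A _ _ _ _ _ _ (by omega) (by omega) (by omega)]; simp
        have e2 : D (k-1) l = f (chA p k l) / ww p k l := by
          simp only [D]
          rw [if_neg (by omega), show k - 1 + 1 = k by omega]
        rw [e1, e2, Int.mul_ediv_cancel' (hwA k l h1 h2 h3 (by omega))]
        ring
      · intro k l h0 h1 h2 h3
        rw [LinearMap.sub_apply, cobd_D hg hodd h0 h1 h2 (by omega), sub_eq_zero]
        rcases Nat.eq_zero_or_pos l with rfl | hl
        · rw [ee_zero, zero_mul, hD0 k h0 h2 (by omega)]
        rw [mkCo_D _ _ _ _ _ _ (by omega) (by omega) (by omega) (by omega)]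
        by_cases hk : k = m
        · have e2 : D k (l-1) = f (chD p k l) / ee k l := by
            simp only [D]
            rw [if_pos hk, show l - 1 + 1 = l by omega]
          subst hk
          rw [e2, Int.mul_ediv_cancel' (hQ l h1 h3 (by omega))]
        · have e2 : D k (l-1) = f (chA p (k+1) (l-1)) / ww p (k+1) (l-1) := by
            simp only [D]
            rw [if_neg hk]
          have h5 := cocycle_A hodd hf (k := k+1) (l := l) (by omega) (by omega) (by omega)
          rw [ee_succ, Nat.add_sub_cancel] at h5
          rw [e2, ww_one (by omega), Int.ediv_one]
          by_cases h6 : l + 1 = k + 1 ∧ Odd (k+1)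
          · have he : Even l := by
              have h7 := h6.2
              rw [Nat.odd_iff] at h7; rw [Nat.even_iff]; omega
            rw [ee_even _ _ he] at h5 ⊢
            have := hww0 (k+1) l
            simp only [neg_zero, zero_mul, add_zero, mul_eq_zero, this, false_or] at h5
            rw [h5, zero_mul]
          · rw [ww, if_neg h6] at h5
            linarith
  · rintro ⟨g, hg, rfl⟩
    rcases Nat.eq_zero_or_pos n with rfl | hn
    · have hz : cobdC p m j (0-1) g = 0 := by
        have h1 := (mem_Kco.1 hf.1).1
        have h2 := (mem_Kco.1 (cobd_mem (j := j) hg)).1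
        ext i
        simp only [LinearMap.coe_comp, Function.comp_apply, lsingle_apply, LinearMap.zero_apply]
        by_cases h : degC i = 0
        · exact h2 i (by omega)
        · exact h1 i (by omega)
      rw [hz]; simp only [LinearMap.zero_apply, dvd_zero, and_self]
    · obtain ⟨n, rfl⟩ := Nat.exists_eq_add_of_le' hn
      simp only [Nat.add_sub_cancel] at hg ⊢
      refine ⟨by simp [NA], ?_, ?_⟩
      · rw [NP]
        split_ifs with h
        · rw [cobd_A hg hodd (by omega) (by omega) (by omega), ww, if_pos, ee_even, zero_mul,
            add_zero]
          · exact dvd_mul_right _ _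
          · rw [Nat.even_iff]; omega
          · rw [Nat.odd_iff]; omega
        · simp
      · rw [NQ]
        split_ifs with h h'
        · rw [cobd_D hg hodd hm (by omega) le_rfl (by omega), ee_even, zero_mul]
          · simp
          · rw [show n + 1 + 1 - m = m by omega]; exact h.2
        · rw [cobd_D hg hodd hm (by omega) le_rfl (by omega), ee_odd _ _ _ (by omega), mul_assoc]
          · exact dvd_mul_right _ _
          · rw [Nat.odd_iff]; omega
        · simp

end DihedralCell

end

open DihedralCell in
/-- The cohomology of the cochain complex `Hom_{ℤ[D_{2p}]}(C(j), ℤ)`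
satisfies `H^n ≅ A_n ⊕ P'_n ⊕ Q'_n`, where `A_n = ℤ` iff `n = 0`; `P'_n = ℤ/p` iff
`0 < n < 2m-1` and `n ≡ 0 (mod 4)`; `Q'_n = ℤ` iff `n = 2m-1` with `m` even, and
`Q'_n = ℤ/2` iff `m+2 ≤ n ≤ 2m-1` with `n ≡ m (mod 2)`. (`ZMod 0 = ℤ`, `ZMod 1 = 0`.) -/
theorem dihedral_cellular_cohomology
    (p : ℕ) (hp : p.Prime) (hodd : Odd p)
    (j : ℕ) (hj1 : 1 ≤ j) (hj2 : j ≤ p - 1)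
    (m : ℕ) (hm : 1 ≤ m) :
    ∀ n : ℕ, Nonempty (HcoC p m j n ≃ₗ[ℤ]
      (ZMod (if n = 0 then 0 else 1) ×
       ZMod (if 0 < n ∧ n < 2 * m - 1 ∧ n % 4 = 0 then p else 1) ×
       ZMod (if n = 2 * m - 1 ∧ Even m then 0
             else if m + 2 ≤ n ∧ n ≤ 2 * m - 1 ∧ n % 2 = m % 2 then 2
             else 1))) := by
  intro n
  have e : HcoC p m j n ≃ₗ[ℤ] (ZMod (NA n) × ZMod (NP p m n) × ZMod (NQ m n)) :=
    (Submodule.quotEquivOfEq _ _ (Phi_ker m j n hp hodd hm).symm).trans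
      ((Phi p m j n).quotKerEquivOfSurjective (Phi_surj m j n hodd hm))
  exact ⟨e⟩
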